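/- arXiv:1808.03366 — 7 statements merged into one kernel-verified Lean document; each statement's English description precedes it below -/
import Mathlib

section
/- Let F be a field of characteristic 0, B a vector space over F with dim_F B < ∞, and G a group whose abelianization G̃ = G/[G,G] is finitely generated. Then for every n ≥ 1, the F-vector space L_n(G,B) of B-valued n-morphisms of G satisfies dim_F L_n(G,B) = dim_F L_n(G̃,B) < ∞. -/
/-- A `B`-valued `n`-morphism (polymorphism) of a group `G`: a function
`G^n → B` which is additive in each of its `n` arguments. -/
def IsPolymorphism {G B : Type*} [Group G] [AddCommGroup B] (n : ℕ)
    (L : (Fin n → G) → B) : Prop :=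
  ∀ (i : Fin n) (g : Fin n → G) (g' g'' : G),
    L (Function.update g i (g' * g''))
      = L (Function.update g i g') + L (Function.update g i g'')

/-- The `F`-vector space `L_n(G,B)` of all `B`-valued `n`-morphisms of `G`,
as a subspace of the space of all functions `Gⁿ → B`. -/
def polymorphismSubmodule (F G B : Type*) [Field F] [Group G] [AddCommGroup B]
    [Module F B] (n : ℕ) : Submodule F ((Fin n → G) → B) where
  carrier := {L | IsPolymorphism n L}
  add_mem' := by
    intro L₁ L₂ h₁ h₂ i g g' g''
    simp only [Pi.add_apply, h₁ i g g' g'', h₂ i g g' g'']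
    abel
  zero_mem' := by
    intro i g g' g''
    simp
  smul_mem' := by
    intro c L h i g g' g''
    simp only [Pi.smul_apply, h i g g' g'', smul_add]

/-- The homomorphism obtained by fixing all arguments but one. -/
def polyHom {G B : Type*} [Group G] [AddCommGroup B] {n : ℕ}
    {L : (Fin n → G) → B} (hL : IsPolymorphism n L) (i : Fin n) (g : Fin n → G) :
    G →* Multiplicative B :=
  MonoidHom.mk' (fun x => Multiplicative.ofAdd (L (Function.update g i x)))
    (fun x y => by rw [hL i g x y]; rfl)

lemma polyHom_apply {G B : Type*} [Group G] [AddCommGroup B] {n : ℕ}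
    {L : (Fin n → G) → B} (hL : IsPolymorphism n L) (i : Fin n) (g : Fin n → G) (x : G) :
    polyHom hL i g x = Multiplicative.ofAdd (L (Function.update g i x)) := rfl

lemma poly_zero {G B : Type*} [Group G] [AddCommGroup B] {n : ℕ}
    {L : (Fin n → G) → B} (hL : IsPolymorphism n L) (S : Set G)
    (hS : Subgroup.closure S = ⊤) (h0 : ∀ g : Fin n → G, (∀ j, g j ∈ S) → L g = 0)
    (T : Finset (Fin n)) : ∀ g : Fin n → G, (∀ j, j ∉ T → g j ∈ S) → L g = 0 := by
  induction T using Finset.induction_on with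
  | empty => exact fun g hg => h0 g (fun j => hg j (by simp))
  | insert i T hi ih =>
    intro g hg
    have key : polyHom hL i g = 1 := by
      apply MonoidHom.eq_of_eqOn_dense hS
      intro x hx
      rw [polyHom_apply, ih]
      · rfl
      · intro j hj
        by_cases hji : j = i
        · subst hji; simpa using hx
        · rw [Function.update_of_ne hji]
          exact hg j (by simp [hji, hj])
    have h2 := DFunLike.congr_fun key (g i)
    rw [polyHom_apply, Function.update_eq_self] at h2
    exact h2

lemma poly_congr {G B : Type*} [Group G] [AddCommGroup B] {n : ℕ}
    {L : (Fin n → G) → B} (hL : IsPolymorphism n L)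
    (T : Finset (Fin n)) : ∀ g g' : Fin n → G, (∀ j, j ∉ T → g j = g' j) →
      (∀ j, Abelianization.of (g j) = Abelianization.of (g' j)) → L g = L g' := by
  induction T using Finset.induction_on with
  | empty => exact fun g g' hg _ => congrArg L (funext fun j => hg j (by simp))
  | insert i T hi ih =>
    intro g g' hg hab
    have h1 : L g = L (Function.update g i (g' i)) := by
      have h2 : polyHom hL i g (g i) = polyHom hL i g (g' i) := by
        rw [← Abelianization.lift_apply_of (polyHom hL i g) (g i), hab i,
          Abelianization.lift_apply_of]
      rw [polyHom_apply, polyHom_apply, Function.update_eq_self] at h2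
      exact h2
    rw [h1]
    apply ih
    · intro j hj
      by_cases hji : j = i
      · subst hji; simp
      · rw [Function.update_of_ne hji]
        exact hg j (by simp [hji, hj])
    · intro j
      by_cases hji : j = i
      · subst hji; simp
      · rw [Function.update_of_ne hji]
        exact hab j

lemma poly_finite (F A B : Type*) [Field F] [Group A]
    [AddCommGroup B] [Module F B] [FiniteDimensional F B]
    (hFG : Group.FG A) (n : ℕ) :
    FiniteDimensional F (polymorphismSubmodule F A B n) := by
  obtain ⟨S, hS⟩ := Group.fg_def.1 hFG
  let r : polymorphismSubmodule F A B n →ₗ[F] ((Fin n → S) → B) :=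
    { toFun := fun L s => L.1 (fun i => (s i : A))
      map_add' := fun _ _ => rfl
      map_smul' := fun _ _ => rfl }
  apply FiniteDimensional.of_injective r
  rw [← LinearMap.ker_eq_bot, LinearMap.ker_eq_bot']
  intro L hL
  apply Subtype.ext
  funext g
  refine poly_zero L.2 (S : Set A) hS ?_ Finset.univ g (by simp)
  intro g hg
  exact congrFun hL (fun i => ⟨g i, hg i⟩)

/-- Pullback along the abelianization map. -/
def polyPull (F G B : Type*) [Field F] [Group G] [AddCommGroup B] [Module F B] (n : ℕ) :
    polymorphismSubmodule F (Abelianization G) B n →ₗ[F] polymorphismSubmodule F G B n where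
  toFun L := ⟨fun g => L.1 (fun i => Abelianization.of (g i)), by
    intro i g x y
    have h := L.2 i (fun i => Abelianization.of (g i)) (Abelianization.of x) (Abelianization.of y)
    have e : ∀ z : G, (fun j => Abelianization.of (Function.update g i z j))
        = Function.update (fun i => Abelianization.of (g i)) i (Abelianization.of z) := by
      intro z
      funext j
      by_cases hji : j = i
      · subst hji; simp
      · simp [Function.update_of_ne hji]
    simp only [e, map_mul]
    exact h⟩
  map_add' _ _ := rfl
  map_smul' _ _ := rfl

lemma abel_of_surj (G : Type*) [Group G] :
    Function.Surjective (Abelianization.of : G →* Abelianization G) :=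
  QuotientGroup.mk_surjective

lemma polyPull_bij (F G B : Type*) [Field F] [Group G] [AddCommGroup B] [Module F B] (n : ℕ) :
    Function.Bijective (polyPull F G B n) := by
  choose s hs using abel_of_surj G
  constructor
  · intro L M h
    apply Subtype.ext
    funext a
    have h2 := congrFun (congrArg Subtype.val h) (fun i => s (a i))
    simpa [polyPull, hs] using h2
  · intro L
    refine ⟨⟨fun a => L.1 (fun i => s (a i)), ?_⟩, ?_⟩
    · intro i a x y
      have e : ∀ (z : Abelianization G) (w : G), Abelianization.of w = z →
          L.1 (fun j => s (Function.update a i z j))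
            = L.1 (Function.update (fun j => s (a j)) i w) := by
        intro z w hw
        refine poly_congr L.2 Finset.univ _ _ (by simp) ?_
        intro j
        rw [hs]
        by_cases hji : j = i
        · subst hji; simp [hw]
        · simp [Function.update_of_ne hji, hs]
      show L.1 _ = L.1 _ + L.1 _
      rw [e (x * y) (s x * s y) (by simp [hs]), e x (s x) (hs x), e y (s y) (hs y)]
      exact L.2 i _ _ _
    · apply Subtype.ext
      funext g
      exact poly_congr L.2 Finset.univ _ _ (by simp) (fun j => hs _)

/-- Let `F` be a field of characteristic `0`, `B` a
finite-dimensional `F`-vector space, and `G` a group whose abelianization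
`G̃ = G/[G,G]` is finitely generated.  Then for every `n ≥ 1` the space
`L_n(G,B)` of `B`-valued `n`-morphisms of `G` is finite dimensional, of the
same dimension as `L_n(G̃,B)`. -/
theorem stmt_7 (F G B : Type*) [Field F] [CharZero F] [Group G]
    [AddCommGroup B] [Module F B] [FiniteDimensional F B]
    (hFG : Group.FG (Abelianization G)) (n : ℕ) (hn : 1 ≤ n) :
    FiniteDimensional F (polymorphismSubmodule F G B n) ∧
      Module.finrank F (polymorphismSubmodule F G B n)
        = Module.finrank F (polymorphismSubmodule F (Abelianization G) B n) := by
  have e := LinearEquiv.ofBijective (polyPull F G B n) (polyPull_bij F G B n)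
  have := poly_finite F (Abelianization G) B hFG n
  exact ⟨Module.Finite.equiv e, e.finrank_eq.symm⟩
end

section
/- For every n ≥ 1, the operator identity δ^n ∘ d_{n-1} = d_n ∘ δ^{n-1} + (−1)^n d_n ∘ d_{n-1} holds on C^{n-1}(G,A); that is, for every c ∈ C^{n-1}(G,A) and all g_1,…,g_{n+1} ∈ G, (δ^n(d_{n-1}c))(g_1,…,g_{n+1}) = (d_n(δ^{n-1}c))(g_1,…,g_{n+1}) + (−1)^n (d_n(d_{n-1}c))(g_1,…,g_{n+1}). -/
/-- The single-step difference operator `d : Cⁿ(G,A) → C^{n+1}(G,A)` for a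
right `G`-action `act` on `A`:
`(d c)(g₁,…,g_{n+1}) = (c(g₁,…,gₙ))^{g_{n+1}} − c(g₁,…,gₙ)`. -/
def dstep {A G : Type*} [AddCommGroup A] [Group G] (act : A → G → A) (n : ℕ)
    (c : (Fin n → G) → A) : (Fin (n + 1) → G) → A := fun g =>
  act (c (fun i => g i.castSucc)) (g (Fin.last n)) - c (fun i => g i.castSucc)

/-- The coboundary operator `δⁿ : Cⁿ(G,A) → C^{n+1}(G,A)` for the trivial left
`G`-action on `A`. -/
def coboundary {G A : Type*} [Group G] [AddCommGroup A] (n : ℕ)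
    (c : (Fin n → G) → A) : (Fin (n + 1) → G) → A := fun g =>
  c (fun i => g i.succ)
    + (∑ i : Fin n, ((-1 : ℤ) ^ ((i : ℕ) + 1)) •
        c (fun j => if (j : ℕ) < (i : ℕ) then g j.castSucc
            else if j = i then g i.castSucc * g i.succ
            else g j.succ))
    + ((-1 : ℤ) ^ (n + 1)) • c (fun i => g i.castSucc)

/-- For every `n ≥ 1` (written here as `n = m + 1`), the
operator identity `δⁿ ∘ d_{n-1} = dₙ ∘ δ^{n-1} + (−1)ⁿ dₙ ∘ d_{n-1}` holds on
cochains with `n − 1 = m` arguments. -/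
theorem stmt_10 {A G : Type*} [AddCommGroup A] [Group G] (act : A → G → A)
    (hadd : ∀ (a b : A) (g : G), act (a + b) g = act a g + act b g)
    (hone : ∀ a : A, act a 1 = a)
    (hcomp : ∀ (a : A) (g h : G), act (act a g) h = act a (g * h))
    (m : ℕ) (c : (Fin m → G) → A) (g : Fin (m + 2) → G) :
    coboundary (m + 1) (dstep act m c) g
      = dstep act (m + 1) (coboundary m c) g
        + ((-1 : ℤ) ^ (m + 1)) • dstep act (m + 1) (dstep act m c) g := by
  obtain ⟨φ, hφ⟩ : ∃ φ : G → A →+ A, ∀ a h, act a h = φ h a :=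
    ⟨fun h => AddMonoidHom.mk' (fun a => act a h) (fun a b => hadd a b h), fun _ _ => rfl⟩
  have hc : ∀ (a : A) (x y : G), φ y (φ x a) = φ (x * y) a := by
    intro a x y
    rw [← hφ, ← hφ, ← hφ, hcomp]
  have hmid : ∀ i : Fin m,
      dstep act m c (fun j : Fin (m + 1) =>
        if (j : ℕ) < ((i.castSucc : Fin (m + 1)) : ℕ) then g j.castSucc
            else if j = i.castSucc then g i.castSucc.castSucc * g i.castSucc.succ
            else g j.succ)
      = φ (g (Fin.last (m + 1))) (c (fun j => if (j : ℕ) < (i : ℕ) then g j.castSucc.castSucc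
            else if j = i then g i.castSucc.castSucc * g i.succ.castSucc
            else g j.succ.castSucc))
        - c (fun j => if (j : ℕ) < (i : ℕ) then g j.castSucc.castSucc
            else if j = i then g i.castSucc.castSucc * g i.succ.castSucc
            else g j.succ.castSucc) := by
    intro i
    have h1 : ¬ (m < (i : ℕ)) := by omega
    have h2 : Fin.last m ≠ i.castSucc := (Fin.castSucc_lt_last i).ne'
    simp only [dstep, hφ, Fin.val_last, Fin.val_castSucc, h1, h2, if_false, Fin.succ_last,
      Fin.castSucc_inj, Fin.succ_castSucc]
  have hlast : dstep act m c (fun j : Fin (m + 1) =>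
        if (j : ℕ) < ((Fin.last m : Fin (m + 1)) : ℕ) then g j.castSucc
            else if j = Fin.last m then g (Fin.last m).castSucc * g (Fin.last m).succ
            else g j.succ)
      = φ (g (Fin.last m).castSucc * g (Fin.last (m + 1))) (c (fun j => g j.castSucc.castSucc))
        - c (fun j => g j.castSucc.castSucc) := by
    simp [dstep, hφ]
  have hsgn : ((-1 : ℤ) ^ (m + 1 + 1)) = - ((-1 : ℤ) ^ (m + 1)) := by ring
  unfold coboundary
  rw [Fin.sum_univ_castSucc, hlast]
  simp only [hmid]
  simp only [dstep, hφ, map_add, map_sub, map_sum, map_zsmul, hc, smul_sub,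
    Finset.sum_sub_distrib, Fin.val_castSucc, Fin.val_last, hsgn, neg_smul, Fin.succ_last,
    Fin.succ_castSucc]
  abel
end

section
/- For every n ≥ 1, the composition δ^n ∘ D^n : A → C^{n+1}(G,A) equals −D^{n+1} if n is odd and equals 0 if n is even; that is, for all a ∈ A and g_1,…,g_{n+1} ∈ G, (δ^n(D^n a))(g_1,…,g_{n+1}) = −[D^{n+1}a](g_1,…,g_{n+1}) when n is odd and (δ^n(D^n a))(g_1,…,g_{n+1}) = 0 when n is even. -/
/-- The iterated difference operator `D^n` associated with a right `G`-action
`act : A → G → A` on an additive abelian group `A`. -/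
def iterD {A G : Type*} [AddCommGroup A] [Group G] (act : A → G → A) :
    (n : ℕ) → A → (Fin n → G) → A
  | 0, a, _ => a
  | n + 1, a, g =>
      act (iterD act n a (fun i => g i.castSucc)) (g (Fin.last n))
        - iterD act n a (fun i => g i.castSucc)

theorem iterD_merge {A G : Type*} [AddCommGroup A] [Group G] (act : A → G → A)
    (hadd : ∀ (a b : A) (g : G), act (a + b) g = act a g + act b g)
    (hcomp : ∀ (a : A) (g h : G), act (act a g) h = act a (g * h)) (a : A) :
    ∀ (n : ℕ) (g : Fin (n + 1) → G) (i : Fin n),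
    iterD act n a (fun j => if (j : ℕ) < (i : ℕ) then g j.castSucc
            else if j = i then g i.castSucc * g i.succ
            else g j.succ) = iterD act (n + 1) a g
      + iterD act n a (fun j => g (i.castSucc.succAbove j))
      + iterD act n a (fun j => g (i.succ.succAbove j)) := by
  have hsub : ∀ (a b : A) (g : G), act (a - b) g = act a g - act b g := by
    intro a b g
    have := hadd (a - b) b g
    rw [sub_add_cancel] at this
    rw [this, add_sub_cancel_right]
  intro n
  induction n with
  | zero => intro g i; exact i.elim0
  | succ n ih =>
    intro g i
    induction i using Fin.lastCases with
    | last =>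
      have e1 : (fun j : Fin n => g ((Fin.last n).castSucc.succAbove j.castSucc))
          = fun j => g j.castSucc.castSucc := by
        funext j; congr 1
        rw [Fin.succAbove_of_castSucc_lt]
        simp [Fin.lt_def]
      have e2 : (fun j : Fin n => g ((Fin.last n).succ.succAbove j.castSucc))
          = fun j => g j.castSucc.castSucc := by
        funext j; congr 1
        rw [Fin.succAbove_of_castSucc_lt]
        simp [Fin.lt_def]
      have e3 : (Fin.last n).castSucc.succAbove (Fin.last n) = Fin.last (n + 1) := by
        simp
      have e4 : (Fin.last n).succ.succAbove (Fin.last n) = (Fin.last n).castSucc := by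
        simp
      simp only [iterD, e1, e2, e3, e4]
      simp [hsub, hcomp]
      abel
    | cast i =>
      have h := ih (fun j => g j.castSucc) i
      have e1 : ∀ j : Fin n, i.castSucc.castSucc.succAbove j.castSucc
          = (i.castSucc.succAbove j).castSucc := by
        intro j; simp
      have e2 : ∀ j : Fin n, i.castSucc.succ.succAbove j.castSucc
          = (i.succ.succAbove j).castSucc := by
        intro j; rw [Fin.succ_castSucc, Fin.castSucc_succAbove_castSucc]
      have e3 : i.castSucc.castSucc.succAbove (Fin.last n) = Fin.last (n + 1) := by
        rw [Fin.succAbove_of_le_castSucc _ _ (by simp [Fin.le_def]; try omega), Fin.succ_last]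
      have e4 : i.castSucc.succ.succAbove (Fin.last n) = Fin.last (n + 1) := by
        rw [Fin.succAbove_of_le_castSucc _ _ (by simp [Fin.le_def]; try omega), Fin.succ_last]
      have hm : (fun j : Fin n => if (j.castSucc : ℕ) < (i.castSucc : ℕ) then g j.castSucc.castSucc
            else if j.castSucc = i.castSucc then g i.castSucc.castSucc * g i.castSucc.succ
            else g j.castSucc.succ) = (fun j : Fin n => if (j : ℕ) < (i : ℕ) then g j.castSucc.castSucc
            else if j = i then g i.castSucc.castSucc * g i.succ.castSucc
            else g j.succ.castSucc) := by
        funext j; simp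
      have hl1 : ¬ ((Fin.last n : Fin (n + 1)) : ℕ) < (i.castSucc : ℕ) := by
        simp
      have hl2 : ¬ Fin.last n = i.castSucc := by
        simp [Fin.ext_iff]; omega
      rw [iterD, iterD, iterD.eq_2 act a n (fun j => g (i.castSucc.castSucc.succAbove j)),
        iterD.eq_2 act a n (fun j => g (i.castSucc.succ.succAbove j))]
      simp only [e1, e2, e3, e4]
      rw [hm, h, if_neg hl1, if_neg hl2, hadd, hadd, Fin.succ_last]
      abel

theorem alt_telescope {A : Type*} [AddCommGroup A] :
    ∀ (n : ℕ) (f : Fin (n + 1) → A),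
      f 0 + (∑ i : Fin n, ((-1 : ℤ) ^ ((i : ℕ) + 1)) • (f i.castSucc + f i.succ))
        + ((-1 : ℤ) ^ (n + 1)) • f (Fin.last n) = 0 := by
  intro n
  induction n with
  | zero => intro f; simp
  | succ n ih =>
    intro f
    have h := ih (fun j => f j.castSucc)
    rw [Fin.sum_univ_castSucc]
    simp only [Fin.castSucc_zero, Fin.val_castSucc, Fin.val_last, Fin.succ_last,
      Fin.succ_castSucc] at h ⊢
    rw [← h, pow_succ (-1 : ℤ) (n + 1), mul_neg_one, neg_smul, smul_add]
    abel

theorem alt_const {A : Type*} [AddCommGroup A] (x : A) (n : ℕ) :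
    (Odd n → ∑ i : Fin n, ((-1 : ℤ) ^ ((i : ℕ) + 1)) • x = -x) ∧
    (Even n → ∑ i : Fin n, ((-1 : ℤ) ^ ((i : ℕ) + 1)) • x = 0) := by
  induction n with
  | zero => simp
  | succ n ih =>
    rw [Fin.sum_univ_castSucc]
    simp only [Fin.val_castSucc, Fin.val_last]
    constructor
    · intro h
      have he : Even n := by rcases h with ⟨k, hk⟩; exact ⟨k, by omega⟩
      rw [ih.2 he, h.neg_one_pow]; simp
    · intro h
      have he : Odd n := by
        rcases Nat.even_or_odd n with h' | h'
        · exact absurd h (by simpa [Nat.even_add_one] using h')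
        · exact h'
      rw [ih.1 he, h.neg_one_pow]; simp

/-- For every `n ≥ 1`, `δⁿ ∘ Dⁿ = −D^{n+1}` if `n` is odd and
`δⁿ ∘ Dⁿ = 0` if `n` is even. -/
theorem stmt_11 {A G : Type*} [AddCommGroup A] [Group G] (act : A → G → A)
    (hadd : ∀ (a b : A) (g : G), act (a + b) g = act a g + act b g)
    (hone : ∀ a : A, act a 1 = a)
    (hcomp : ∀ (a : A) (g h : G), act (act a g) h = act a (g * h))
    (n : ℕ) (hn : 1 ≤ n) (a : A) (g : Fin (n + 1) → G) :
    (Odd n → coboundary n (iterD act n a) g = - iterD act (n + 1) a g) ∧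
      (Even n → coboundary n (iterD act n a) g = 0) := by
  have key : coboundary n (iterD act n a) g
      = ∑ i : Fin n, ((-1 : ℤ) ^ ((i : ℕ) + 1)) • iterD act (n + 1) a g := by
    have ht := alt_telescope n (fun k => iterD act n a (fun j => g (k.succAbove j)))
    simp only [Fin.succAbove_zero, Fin.succAbove_last] at ht
    unfold coboundary
    simp only [iterD_merge act hadd hcomp a n g, add_assoc, smul_add,
      Finset.sum_add_distrib] at ht ⊢
    refine Eq.trans ?_ ((congrArg
      ((∑ i : Fin n, ((-1 : ℤ) ^ ((i : ℕ) + 1)) • iterD act (n + 1) a g) + ·) ht).trans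
      (add_zero _))
    abel
  rw [key]
  exact alt_const _ n
end

section
/- Let n ≥ 0 and a ∈ P_n(G,A). Then D^n a is an n-cocycle of G with values in A^G for the trivial G-action: all values [D^n a](g_1,…,g_n) lie in A^G, and δ^n(D^n a) = 0. -/
/-- Difference operator on sequences. -/
def seqD {A G : Type*} [AddCommGroup A] (act : A → G → A) (a : A) (s : ℕ → G) : ℕ → A
  | 0 => a
  | n + 1 => act (seqD act a s n) (s n) - seqD act a s n

theorem seqD_congr {A G : Type*} [AddCommGroup A] (act : A → G → A) (a : A) (s t : ℕ → G)
    (n : ℕ) (h : ∀ j < n, s j = t j) : seqD act a s n = seqD act a t n := by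
  induction n with
  | zero => rfl
  | succ n ih =>
    simp only [seqD]
    rw [ih (fun j hj => h j (by omega)), h n (by omega)]

theorem iterD_eq_seqD {A G : Type*} [AddCommGroup A] [Group G] (act : A → G → A) (a : A)
    (s : ℕ → G) (n : ℕ) (g : Fin n → G) (h : ∀ j : Fin n, g j = s j) :
    iterD act n a g = seqD act a s n := by
  induction n with
  | zero => rfl
  | succ n ih =>
    simp only [seqD, iterD]
    rw [ih (fun i => g i.castSucc) (fun j => by simp [h]), h (Fin.last n)]
    simp

/-- Omit entry `k`. -/
def omitS {G : Type*} (s : ℕ → G) (k : ℕ) : ℕ → G := fun j => if j < k then s j else s (j + 1)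

/-- Multiply entries `i` and `i+1`. -/
def mergeS {G : Type*} [Group G] (s : ℕ → G) (i : ℕ) : ℕ → G := fun j =>
  if j < i then s j else if j = i then s i * s (i + 1) else s (j + 1)

theorem seqD_merge {A G : Type*} [AddCommGroup A] [Group G] (act : A → G → A)
    (hadd : ∀ (a b : A) (g : G), act (a + b) g = act a g + act b g)
    (hcomp : ∀ (a : A) (g h : G), act (act a g) h = act a (g * h))
    (a : A) (s : ℕ → G) (n i : ℕ) (hi : i < n) :
    seqD act a (mergeS s i) n =
      seqD act a (omitS s i) n + seqD act a (omitS s (i + 1)) n + seqD act a s (n + 1) := by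
  have hsub : ∀ (a b : A) (g : G), act (a - b) g = act a g - act b g := by
    intro a b g
    have := hadd (a - b) b g
    rw [sub_add_cancel] at this
    rw [this]; abel
  induction n with
  | zero => omega
  | succ n ih =>
    rcases Nat.lt_succ_iff_lt_or_eq.mp hi with h | h
    · have e := ih h
      rw [seqD, seqD, seqD, seqD, e]
      have h1 : mergeS s i n = s (n + 1) := by
        simp [mergeS, show ¬ n < i by omega, show n ≠ i by omega]
      have h2 : omitS s i n = s (n + 1) := by
        simp [omitS, show ¬ n < i by omega]
      have h3 : omitS s (i + 1) n = s (n + 1) := by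
        simp [omitS, show ¬ n < i + 1 by omega]
      rw [h1, h2, h3, hadd, hadd]
      abel
    · subst h
      have e1 := seqD_congr act a (mergeS s i) s i (fun j hj => by simp [mergeS, hj])
      have e2 := seqD_congr act a (omitS s i) s i (fun j hj => by simp [omitS, hj])
      have e3 := seqD_congr act a (omitS s (i + 1)) s i
        (fun j hj => by simp [omitS, show j < i + 1 by omega])
      simp only [seqD, e1, e2, e3, hsub, hcomp]
      simp only [mergeS, omitS, lt_irrefl, if_true, if_false, Nat.lt_succ_self]
      abel

theorem tele_sum {A : Type*} [AddCommGroup A] (t : ℕ → A) (m : ℕ) :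
    ∑ i ∈ Finset.range m, ((-1 : ℤ) ^ (i + 1)) • (t i + t (i + 1)) =
      - t 0 + ((-1 : ℤ) ^ m) • t m := by
  induction m with
  | zero => simp
  | succ m ih =>
    rw [Finset.sum_range_succ, ih, pow_succ, smul_add]
    simp only [mul_neg, mul_one, neg_smul]
    abel

/-- Let `n ≥ 0` and `a ∈ P_n(G,A)` (i.e. `D^{n+1} a = 0`).
Then `Dⁿ a` is an `n`-cocycle of `G` with values in `A^G` for the trivial
`G`-action: all values of `Dⁿ a` are `G`-invariant and `δⁿ (Dⁿ a) = 0`. -/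
theorem stmt_12 {A G : Type*} [AddCommGroup A] [Group G] (act : A → G → A)
    (hadd : ∀ (a b : A) (g : G), act (a + b) g = act a g + act b g)
    (hone : ∀ a : A, act a 1 = a)
    (hcomp : ∀ (a : A) (g h : G), act (act a g) h = act a (g * h))
    (n : ℕ) (a : A)
    (ha : ∀ g : Fin (n + 1) → G, iterD act (n + 1) a g = 0) :
    (∀ (g : G) (gs : Fin n → G),
        act (iterD act n a gs) g = iterD act n a gs) ∧
      (∀ g : Fin (n + 1) → G, coboundary n (iterD act n a) g = 0) := by
  refine ⟨fun g gs => ?_, fun g => ?_⟩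
  · have := ha (Fin.snoc gs g)
    simpa [iterD, sub_eq_zero] using this
  · obtain ⟨s, hs⟩ : ∃ s : ℕ → G, ∀ j : Fin (n + 1), g j = s j :=
      ⟨fun k => if h : k < n + 1 then g ⟨k, h⟩ else 1, fun j => by simp only [j.isLt, dif_pos]⟩
    have h0 : seqD act a s (n + 1) = 0 := by
      rw [← iterD_eq_seqD act a s (n + 1) g hs]; exact ha g
    unfold coboundary
    rw [iterD_eq_seqD act a (omitS s 0) n _ (fun j => by simp [omitS, hs]),
      iterD_eq_seqD act a (omitS s n) n _ (fun j => by simp [omitS, hs])]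
    have hsum : ∀ i : Fin n, iterD act n a (fun j => if (j : ℕ) < (i : ℕ) then g j.castSucc
            else if j = i then g i.castSucc * g i.succ
            else g j.succ) =
        seqD act a (omitS s i) n + seqD act a (omitS s (i + 1)) n := by
      intro i
      rw [iterD_eq_seqD act a (mergeS s i) n _ (fun j => by simp [mergeS, hs, Fin.ext_iff]),
        seqD_merge act hadd hcomp a s n i i.2, h0, add_zero]
    simp only [hsum]
    rw [Fin.sum_univ_eq_sum_range (fun i => ((-1 : ℤ) ^ (i + 1)) •
      (seqD act a (omitS s i) n + seqD act a (omitS s (i + 1)) n)) n,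
      tele_sum (fun i => seqD act a (omitS s i) n), pow_succ]
    simp
end

section
/- Let F be a field of characteristic 0, G a group, and A an F-vector space endowed with a linear right G-action. If the abelianization G̃ = G/[G,G] is finitely generated and dim_F A^G < ∞, then dim_F P_n(G,A) < ∞ for every n ≥ 0. -/
theorem iterD_add {A G : Type*} [AddCommGroup A] [Group G] (act : A → G → A)
    (hadd : ∀ (a b : A) (g : G), act (a + b) g = act a g + act b g) :
    ∀ (n : ℕ) (a b : A) (g : Fin n → G),
      iterD act n (a + b) g = iterD act n a g + iterD act n b g
  | 0, a, b, g => rfl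
  | n + 1, a, b, g => by
      simp only [iterD, iterD_add act hadd n, hadd]
      abel

theorem iterD_smul {F A G : Type*} [Field F] [AddCommGroup A] [Module F A]
    [Group G] (act : A → G → A)
    (hsmul : ∀ (c : F) (a : A) (g : G), act (c • a) g = c • act a g) :
    ∀ (n : ℕ) (c : F) (a : A) (g : Fin n → G),
      iterD act n (c • a) g = c • iterD act n a g
  | 0, c, a, g => rfl
  | n + 1, c, a, g => by
      simp only [iterD, iterD_smul act hsmul n, hsmul, smul_sub]

/-- The subspace `A^G ⊆ A` of `G`-invariant elements. -/
def invariants (F : Type*) {A G : Type*} [Field F] [AddCommGroup A] [Module F A]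
    [Group G] (act : A → G → A)
    (hadd : ∀ (a b : A) (g : G), act (a + b) g = act a g + act b g)
    (hsmul : ∀ (c : F) (a : A) (g : G), act (c • a) g = c • act a g) :
    Submodule F A where
  carrier := {a | ∀ g : G, act a g = a}
  add_mem' := by
    intro a b ha hb g
    rw [hadd, ha g, hb g]
  zero_mem' := by
    intro g
    simpa using hsmul 0 0 g
  smul_mem' := by
    intro c a ha g
    rw [hsmul, ha g]

/-- The subspace `P_n(G,A) = ker D^{n+1} ⊆ A` of polynomial-like elements of
order at most `n`. -/
def polyElems (F : Type*) {A G : Type*} [Field F] [AddCommGroup A] [Module F A]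
    [Group G] (act : A → G → A)
    (hadd : ∀ (a b : A) (g : G), act (a + b) g = act a g + act b g)
    (hsmul : ∀ (c : F) (a : A) (g : G), act (c • a) g = c • act a g)
    (n : ℕ) : Submodule F A where
  carrier := {a | ∀ g : Fin (n + 1) → G, iterD act (n + 1) a g = 0}
  add_mem' := by
    intro a b ha hb g
    rw [iterD_add act hadd, ha g, hb g, add_zero]
  zero_mem' := by
    intro g
    have h := iterD_smul act hsmul (n + 1) (0 : F) 0 g
    simpa using h
  smul_mem' := by
    intro c a ha g
    rw [iterD_smul act hsmul, ha g, smul_zero]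

/-- Recursive version of the polynomial-like subspaces: `polyQ (n+1) = P_n`. -/
def polyQ (F : Type*) {A G : Type*} [Field F] [AddCommGroup A] [Module F A]
    [Group G] (T : G → A →ₗ[F] A) : ℕ → Submodule F A
  | 0 => ⊥
  | n + 1 => ⨅ g : G, (polyQ F T n).comap (T g)

theorem mem_polyQ_succ {F A G : Type*} [Field F] [AddCommGroup A] [Module F A]
    [Group G] (T : G → A →ₗ[F] A) (n : ℕ) (a : A) :
    a ∈ polyQ F T (n + 1) ↔ ∀ g, T g a ∈ polyQ F T n := by
  simp [polyQ]

theorem iterD_shift {A G : Type*} [AddCommGroup A] [Group G] (act : A → G → A) :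
    ∀ (n : ℕ) (a : A) (g : Fin (n + 1) → G),
      iterD act (n + 1) a g = iterD act n (act a (g 0) - a) (fun i => g i.succ)
  | 0, a, g => rfl
  | n + 1, a, g => by
      rw [iterD, iterD_shift act n, iterD]
      rfl

theorem iterD_iff {F A G : Type*} [Field F] [AddCommGroup A] [Module F A]
    [Group G] (act : A → G → A) (T : G → A →ₗ[F] A)
    (hT : ∀ g a, T g a = act a g - a) (n : ℕ) : ∀ a : A,
    (∀ g : Fin n → G, iterD act n a g = 0) ↔ a ∈ polyQ F T n := by
  induction n with
  | zero => intro a; simp [iterD, polyQ]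
  | succ n ih =>
    intro a
    rw [mem_polyQ_succ]
    constructor
    · intro h g
      rw [← ih]
      intro k
      have := h (Fin.cons g k)
      rw [iterD_shift] at this
      simpa [hT] using this
    · intro h g
      rw [iterD_shift, ← hT]
      exact (ih _).2 (h _) _

theorem polyQ_mono {F A G : Type*} [Field F] [AddCommGroup A] [Module F A]
    [Group G] (T : G → A →ₗ[F] A) (n : ℕ) : polyQ F T n ≤ polyQ F T (n + 1) := by
  induction n with
  | zero => exact bot_le
  | succ n ih =>
    intro a ha
    rw [mem_polyQ_succ] at ha ⊢
    exact fun g => ih (ha g)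

/-- If `a` has order at most `n+2` and its differences along representatives of generators of the
abelianization have order at most `n`, then so have all its differences. -/
theorem polyQ_key {F A G : Type*} [Field F] [AddCommGroup A] [Module F A]
    [Group G] (T : G → A →ₗ[F] A)
    (hmul : ∀ g h a, T (g * h) a = T h (T g a) + T g a + T h a)
    (S : Set (Abelianization G)) (hS : Subgroup.closure S = ⊤)
    (r : Abelianization G → G) (hr : ∀ x, Abelianization.of (r x) = x)
    (n : ℕ) (a : A) (ha : a ∈ polyQ F T (n + 2))
    (has : ∀ s ∈ S, T (r s) a ∈ polyQ F T n) : a ∈ polyQ F T (n + 1) := by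
  let φ : G →* Multiplicative (A ⧸ polyQ F T n) := MonoidHom.mk'
    (fun g => Multiplicative.ofAdd ((polyQ F T n).mkQ (T g a))) (by
      intro g h
      rw [← ofAdd_add, ← map_add]
      congr 1
      rw [← sub_eq_zero, ← map_sub, ← LinearMap.mem_ker, Submodule.ker_mkQ, hmul]
      have := (mem_polyQ_succ T n _).1 ((mem_polyQ_succ T (n + 1) a).1 ha g) h
      convert this using 1
      abel)
  have hφ : ∀ g, φ g = 1 ↔ T g a ∈ polyQ F T n := by
    intro g
    change (polyQ F T n).mkQ (T g a) = 0 ↔ _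
    rw [← LinearMap.mem_ker, Submodule.ker_mkQ]
  have h1 : Abelianization.lift φ = 1 := by
    apply MonoidHom.eq_of_eqOn_dense hS
    intro s hs
    have := (hφ _).2 (has s hs)
    rw [← Abelianization.lift_apply_of φ, hr] at this
    simpa using this
  rw [mem_polyQ_succ]
  intro g
  rw [← hφ, ← Abelianization.lift_apply_of φ, h1]
  rfl

theorem polyQ_fg {F A G : Type*} [Field F] [AddCommGroup A] [Module F A]
    [Group G] (T : G → A →ₗ[F] A)
    (hmul : ∀ g h a, T (g * h) a = T h (T g a) + T g a + T h a)
    (hFG : Group.FG (Abelianization G)) (h1 : (polyQ F T 1).FG) (n : ℕ) :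
    (polyQ F T (n + 1)).FG := by
  induction n with
  | zero => exact h1
  | succ n ih =>
    obtain ⟨S, hS⟩ := hFG.out
    obtain ⟨r, hr⟩ : ∃ r : Abelianization G → G, ∀ x, Abelianization.of (r x) = x :=
      ⟨Quotient.out, fun x => Quotient.out_eq x⟩
    let f : A →ₗ[F] (S → A) := LinearMap.pi fun s => T (r s)
    have : FiniteDimensional F (polyQ F T (n + 1)) := Module.Finite.iff_fg.2 ih
    apply Submodule.fg_of_fg_map_of_fg_inf_ker f
    · have h2 : (Submodule.pi Set.univ (fun _ : S => polyQ F T (n + 1))).FG :=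
        Submodule.fg_pi fun _ => ih
      have := Module.Finite.iff_fg.2 h2
      apply Module.Finite.iff_fg.1
      apply Submodule.finiteDimensional_of_le (S₂ := Submodule.pi Set.univ (fun _ : S => polyQ F T (n + 1)))
      rintro _ ⟨a, ha, rfl⟩ s -
      exact (mem_polyQ_succ T (n + 1) a).1 ha _
    · apply Module.Finite.iff_fg.1
      apply Submodule.finiteDimensional_of_le (S₂ := polyQ F T (n + 1))
      rintro a ⟨ha, hk⟩
      refine polyQ_key T hmul S hS r hr n a ha fun s hs => ?_
      have : T (r s) a = 0 := congrFun (LinearMap.mem_ker.1 hk) ⟨s, hs⟩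
      rw [this]
      exact zero_mem _

/-- **Main Theorem.** Let `F` be a field of characteristic `0`,
`G` a group, and `A` an `F`-vector space with a linear right `G`-action.  If
the abelianization `G̃ = G/[G,G]` is finitely generated and `dim_F A^G < ∞`,
then `dim_F P_n(G,A) < ∞` for every `n ≥ 0`. -/
theorem stmt_14 {F A G : Type*} [Field F] [CharZero F] [AddCommGroup A]
    [Module F A] [Group G] (act : A → G → A)
    (hadd : ∀ (a b : A) (g : G), act (a + b) g = act a g + act b g)
    (hsmul : ∀ (c : F) (a : A) (g : G), act (c • a) g = c • act a g)
    (hone : ∀ a : A, act a 1 = a)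
    (hcomp : ∀ (a : A) (g h : G), act (act a g) h = act a (g * h))
    (hFG : Group.FG (Abelianization G))
    (hfin : FiniteDimensional F (invariants F act hadd hsmul))
    (n : ℕ) :
    FiniteDimensional F (polyElems F act hadd hsmul n) := by
  let T : G → A →ₗ[F] A := fun g =>
    { toFun := fun a => act a g - a
      map_add' := fun a b => by rw [hadd]; abel
      map_smul' := fun c a => by rw [hsmul, RingHom.id_apply, smul_sub] }
  have hT : ∀ g a, T g a = act a g - a := fun _ _ => rfl
  have hmul : ∀ g h a, T (g * h) a = T h (T g a) + T g a + T h a := by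
    intro g h a
    simp only [hT, ← hcomp]
    have : act (act a g - a) h = act (act a g) h - act a h := by
      rw [eq_sub_iff_add_eq, ← hadd, sub_add_cancel]
    rw [this]
    abel
  have e : ∀ k, polyElems F act hadd hsmul k = polyQ F T (k + 1) := by
    intro k
    ext a
    exact iterD_iff act T hT (k + 1) a
  have e1 : polyQ F T 1 = invariants F act hadd hsmul := by
    ext a
    rw [mem_polyQ_succ]
    change (∀ g, act a g - a ∈ (⊥ : Submodule F A)) ↔ ∀ g, act a g = a
    simp [sub_eq_zero]
  rw [e]
  apply Module.Finite.iff_fg.2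
  apply polyQ_fg T hmul hFG
  rw [e1]
  exact Module.Finite.iff_fg.1 hfin
end

section
/- Let G ⊂ R^r be a lattice of rank r acting on C(R^r) by translations. A function p ∈ C(R^r) satisfies D^{n+1} p = 0 (i.e., [D^{n+1}p](g_1,…,g_{n+1}) = 0 for all g_1,…,g_{n+1} ∈ G) if and only if p is a G-periodic polynomial of degree at most n, i.e., p(x) = Σ_{j_1+⋯+j_r ≤ n} f_{j_1,…,j_r}(x) x_1^{j_1}⋯x_r^{j_r} for some continuous G-periodic functions f_{j_1,…,j_r} ∈ C(R^r). -/
/-- The iterated difference operator for the translation action of vectors of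
`ℝ^r` on functions `ℝ^r → ℝ`. -/
def transD (r : ℕ) : (n : ℕ) → ((Fin r → ℝ) → ℝ) → (Fin n → (Fin r → ℝ)) →
    (Fin r → ℝ) → ℝ
  | 0, f, _ => f
  | n + 1, f, g => fun x =>
      transD r n f (fun i => g i.castSucc) (x + g (Fin.last n))
        - transD r n f (fun i => g i.castSucc) x


namespace PerPoly

/-- functions killed by `n` successive differences from `G` -/
def A {r : ℕ} (G : AddSubgroup (Fin r → ℝ)) : ℕ → ((Fin r → ℝ) → ℝ) → Prop
  | 0, p => p = 0
  | n + 1, p => Continuous p ∧ ∀ g ∈ G, A G n (fun x => p (x + g) - p x)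

variable {r : ℕ} {G : AddSubgroup (Fin r → ℝ)}

lemma A_zero (n : ℕ) : A G n 0 := by
  induction n with
  | zero => rfl
  | succ n ih =>
    refine ⟨continuous_zero, fun g _ => ?_⟩
    convert ih using 1
    ext x; simp

lemma A_cont {n : ℕ} {p : (Fin r → ℝ) → ℝ} (h : A G n p) : Continuous p := by
  cases n with
  | zero => rw [show p = 0 from h]; exact continuous_zero
  | succ n => exact h.1

lemma A_add {n : ℕ} : ∀ {p q : (Fin r → ℝ) → ℝ}, A G n p → A G n q → A G n (p + q) := by
  induction n with
  | zero =>
    intro p q hp hq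
    rw [show p = 0 from hp, show q = 0 from hq]
    exact add_zero _
  | succ n ih =>
    intro p q hp hq
    refine ⟨hp.1.add hq.1, fun g hg => ?_⟩
    convert ih (hp.2 g hg) (hq.2 g hg) using 1
    ext x; simp; ring

lemma A_smul {n : ℕ} (c : ℝ) : ∀ {p : (Fin r → ℝ) → ℝ}, A G n p → A G n (c • p) := by
  induction n with
  | zero =>
    intro p hp
    rw [show p = 0 from hp]
    exact smul_zero _
  | succ n ih =>
    intro p hp
    refine ⟨hp.1.const_smul c, fun g hg => ?_⟩
    convert ih (hp.2 g hg) using 1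
    ext x; simp; ring

lemma A_succ {n : ℕ} : ∀ {p : (Fin r → ℝ) → ℝ}, A G n p → A G (n + 1) p := by
  induction n with
  | zero =>
    intro p hp
    rw [show p = 0 from hp]
    exact A_zero _
  | succ n ih =>
    intro p hp
    exact ⟨hp.1, fun g hg => ih (hp.2 g hg)⟩

lemma A_mono {m n : ℕ} (h : m ≤ n) {p : (Fin r → ℝ) → ℝ} (hp : A G m p) : A G n p := by
  induction h with
  | refl => exact hp
  | step _ ih => exact A_succ ih

lemma A_diff {n : ℕ} {p : (Fin r → ℝ) → ℝ} (hp : A G n p) {g : Fin r → ℝ} (hg : g ∈ G) :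
    A G (n - 1) (fun x => p (x + g) - p x) := by
  cases n with
  | zero =>
    rw [show p = 0 from hp]
    show _ = _
    ext x; simp
  | succ n => exact hp.2 g hg

lemma A_iter {n : ℕ} {p : (Fin r → ℝ) → ℝ} (hp : A G n p) {g : Fin r → ℝ} (hg : g ∈ G) (k : ℕ) :
    A G (n - k) ((fwdDiff g)^[k] p) := by
  induction k with
  | zero => exact hp
  | succ k ih =>
    rw [Function.iterate_succ_apply']
    exact A_diff ih hg

lemma A_shift {n : ℕ} {p : (Fin r → ℝ) → ℝ} (hp : A G n p) {g : Fin r → ℝ} (hg : g ∈ G) :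
    A G n (fun x => p (x + g)) := by
  convert A_add hp (A_mono (Nat.sub_le n 1) (A_diff hp hg)) using 1
  ext x; simp

lemma A_lin (l : (Fin r → ℝ) →ₗ[ℝ] ℝ) {n : ℕ} : ∀ {p : (Fin r → ℝ) → ℝ}, A G n p →
    A G (n + 1) (fun x => l x * p x) := by
  induction n with
  | zero =>
    intro p hp
    rw [show p = 0 from hp]
    convert A_zero (G := G) (0 + 1) using 1
    ext x; simp
  | succ n ih =>
    intro p hp
    refine ⟨l.continuous_of_finiteDimensional.mul hp.1, fun g hg => ?_⟩
    convert A_add (ih (hp.2 g hg)) (A_smul (l g) (A_shift hp hg)) using 1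
    ext x; simp; ring

lemma A_lin_pow (l : (Fin r → ℝ) →ₗ[ℝ] ℝ) {n : ℕ} (k : ℕ) {p : (Fin r → ℝ) → ℝ}
    (hp : A G n p) : A G (n + k) (fun x => l x ^ k * p x) := by
  induction k with
  | zero => simpa using hp
  | succ k ih =>
    have e : (fun x => l x ^ (k + 1) * p x) = fun x => l x * (l x ^ k * p x) := by
      ext x; ring
    rw [e]
    exact A_lin l ih

lemma transD_succ' (n : ℕ) : ∀ (p : (Fin r → ℝ) → ℝ) (g : Fin (n + 1) → (Fin r → ℝ)),
    transD r (n + 1) p g = transD r n (fun x => p (x + g 0) - p x) (fun i => g i.succ) := by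
  induction n with
  | zero => intro p g; rfl
  | succ n ih =>
    intro p g
    rw [transD, ih]
    rfl

lemma A_iff (n : ℕ) : ∀ (p : (Fin r → ℝ) → ℝ), Continuous p → (A G n p ↔
    ∀ g : Fin n → (Fin r → ℝ), (∀ i, g i ∈ G) → ∀ x, transD r n p g x = 0) := by
  induction n with
  | zero =>
    intro p _
    constructor
    · intro h g _ x
      rw [show p = 0 from h]; rfl
    · intro h
      ext x
      exact h (fun i => i.elim0) (fun i => i.elim0) x
  | succ n ih =>
    intro p hp
    have hc : ∀ g : Fin r → ℝ, Continuous (fun x => p (x + g) - p x) := fun g => by fun_prop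
    constructor
    · intro h g hg x
      rw [transD_succ']
      exact (ih _ (hc _)).1 (h.2 (g 0) (hg 0)) _ (fun i => hg _) x
    · intro h
      refine ⟨hp, fun g hg => (ih _ (hc _)).2 fun g' hg' x => ?_⟩
      have := h (Fin.cons g g') (fun i => Fin.cases hg hg' i) x
      rw [transD_succ'] at this
      simpa using this

/-- periodic polynomials of degree at most `n`. -/
def Q (G : AddSubgroup (Fin r → ℝ)) (n : ℕ) : Submodule ℝ ((Fin r → ℝ) → ℝ) :=
  Submodule.span ℝ {p | ∃ (f : (Fin r → ℝ) → ℝ) (j : Fin r → ℕ), Continuous f ∧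
    (∀ g ∈ G, ∀ x, f (x + g) = f x) ∧ ∑ k, j k ≤ n ∧ p = fun x => f x * ∏ k, x k ^ j k}

lemma Q_coord {n : ℕ} {p : (Fin r → ℝ) → ℝ} (hp : p ∈ Q G n) (i : Fin r) :
    (fun x => x i * p x) ∈ Q G (n + 1) := by
  induction hp using Submodule.span_induction with
  | mem p h =>
    obtain ⟨f, j, hf, hper, hj, rfl⟩ := h
    refine Submodule.subset_span ⟨f, fun k => j k + (if k = i then 1 else 0), hf, hper, ?_, ?_⟩
    · simp [Finset.sum_add_distrib, hj]
    · ext x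
      simp only [pow_add, Finset.prod_mul_distrib]
      simp [pow_ite]
      ring
  | zero => convert (Q G (n + 1)).zero_mem using 1; ext x; simp
  | add p q _ _ hp hq => convert (Q G (n + 1)).add_mem hp hq using 1; ext x; simp; ring
  | smul c p _ hp => convert (Q G (n + 1)).smul_mem c hp using 1; ext x; simp; ring

lemma Q_lin (l : (Fin r → ℝ) →ₗ[ℝ] ℝ) {n : ℕ} {p : (Fin r → ℝ) → ℝ} (hp : p ∈ Q G n) :
    (fun x => l x * p x) ∈ Q G (n + 1) := by
  have : (fun x => l x * p x) =
      ∑ i, (l fun j => if i = j then 1 else 0) • (fun x : Fin r → ℝ => x i * p x) := by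
    ext x
    rw [LinearMap.pi_apply_eq_sum_univ l x, Finset.sum_mul, Finset.sum_apply]
    refine Finset.sum_congr rfl fun i _ => ?_
    simp; ring
  rw [this]
  exact Submodule.sum_mem _ fun i _ => Submodule.smul_mem _ _ (Q_coord hp i)

lemma Q_lin_pow (l : (Fin r → ℝ) →ₗ[ℝ] ℝ) {n : ℕ} (k : ℕ) {p : (Fin r → ℝ) → ℝ}
    (hp : p ∈ Q G n) : (fun x => l x ^ k * p x) ∈ Q G (n + k) := by
  induction k with
  | zero => simpa using hp
  | succ k ih =>
    have e : (fun x => l x ^ (k + 1) * p x) = fun x => l x * (l x ^ k * p x) := by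
      ext x; ring
    rw [e]
    exact Q_lin l ih

lemma iter_shift (g h : Fin r → ℝ) (k : ℕ) : ∀ (p : (Fin r → ℝ) → ℝ),
    (∀ x, p (x + h) = p x) → ∀ x, (fwdDiff g)^[k] p (x + h) = (fwdDiff g)^[k] p x := by
  induction k with
  | zero => intro p hp; exact hp
  | succ k ih =>
    intro p hp
    rw [Function.iterate_succ_apply]
    refine ih _ fun x => ?_
    simp only [fwdDiff]
    rw [hp, add_right_comm, hp]

/-- iterated difference of a function of `l` times an invariant function. -/
lemma iter_comp (g : Fin r → ℝ) (l : (Fin r → ℝ) →ₗ[ℝ] ℝ) (hl : l g = 1)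
    (q : (Fin r → ℝ) → ℝ) (hq : ∀ x, q (x + g) = q x) (k : ℕ) : ∀ (u : ℝ → ℝ),
    (fwdDiff g)^[k] (fun x => u (l x) * q x) = fun x => ((fwdDiff 1)^[k] u) (l x) * q x := by
  induction k with
  | zero => intro u; rfl
  | succ k ih =>
    intro u
    rw [Function.iterate_succ_apply, Function.iterate_succ_apply, ← ih]
    congr 1
    ext x
    simp only [fwdDiff, map_add, hl, hq]
    ring

lemma main (b : Fin r → (Fin r → ℝ)) (hb : LinearIndependent ℝ b) (S : Finset (Fin r)) :
    ∀ (n : ℕ) (p : (Fin r → ℝ) → ℝ), A (AddSubgroup.closure (Set.range b)) (n + 1) p →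
      (∀ i ∉ S, ∀ x, p (x + b i) = p x) → p ∈ Q (AddSubgroup.closure (Set.range b)) n := by
  have hbG : ∀ i, b i ∈ AddSubgroup.closure (Set.range b) :=
    fun i => AddSubgroup.subset_closure ⟨i, rfl⟩
  induction S using Finset.induction_on with
  | empty =>
    intro n p hp hper
    refine Submodule.subset_span ⟨p, 0, hp.1, ?_, by simp, by simp⟩
    intro g hg
    induction hg using AddSubgroup.closure_induction with
    | mem g h => obtain ⟨i, rfl⟩ := h; exact hper i (by simp)
    | zero => simp
    | add g h _ _ hg hh => intro x; rw [← add_assoc, hh, hg]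
    | neg g _ hg => intro x; rw [← hg (x + -g)]; simp
  | insert i S hi IH =>
    intro n
    obtain ⟨l, hl⟩ : ∃ l : (Fin r → ℝ) →ₗ[ℝ] ℝ, ∀ j, l (b j) = if j = i then 1 else 0 := by
      let B := Module.Basis.mk hb (hb.span_eq_top_of_card_eq_finrank' (by simp)).ge
      refine ⟨B.coord i, fun j => ?_⟩
      have : b j = B j := by simp [B]
      rw [this, Module.Basis.coord_apply, Module.Basis.repr_self, Finsupp.single_apply]
    have key : ∀ k ≤ n + 1, ∀ p : (Fin r → ℝ) → ℝ,
        A (AddSubgroup.closure (Set.range b)) (n + 1) p →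
        (∀ j ∉ insert i S, ∀ x, p (x + b j) = p x) → (fwdDiff (b i))^[k] p = 0 →
        p ∈ Q (AddSubgroup.closure (Set.range b)) n := by
      intro k
      induction k with
      | zero =>
        intro _ p _ _ h
        rw [show p = 0 from h]
        exact Submodule.zero_mem _
      | succ k ih =>
        intro hk p hp hper h
        set q := (fwdDiff (b i))^[k] p with hq
        have hqi : ∀ x, q (x + b i) = q x := by
          intro x
          rw [Function.iterate_succ_apply', ← hq] at h
          have := congrFun h x
          simp only [fwdDiff, Pi.zero_apply] at this
          linarith
        have hqA : A (AddSubgroup.closure (Set.range b)) (n - k + 1) q := by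
          have := A_iter hp (hbG i) k
          rwa [show n + 1 - k = n - k + 1 by omega] at this
        have hqper : ∀ j ∉ S, ∀ x, q (x + b j) = q x := by
          intro j hj
          by_cases hji : j = i
          · subst hji; exact hqi
          · exact iter_shift _ _ _ _ (hper j (by simp [hji, hj]))
        have hqQ := IH _ _ hqA hqper
        set w : (Fin r → ℝ) → ℝ := fun x => l x ^ k * q x with hw
        have hwQ : w ∈ Q (AddSubgroup.closure (Set.range b)) n := by
          have := Q_lin_pow l k hqQ
          rwa [show n - k + k = n by omega] at this
        have hwA : A (AddSubgroup.closure (Set.range b)) (n + 1) w := by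
          have := A_lin_pow l k hqA
          rwa [show n - k + 1 + k = n + 1 by omega] at this
        have hwD : (fwdDiff (b i))^[k] w = (k.factorial : ℝ) • q := by
          rw [hw, iter_comp (b i) l (by simp [hl]) q hqi k (fun t => t ^ k),
            fwdDiff_iter_eq_factorial]
          ext x; simp
        set c : ℝ := -(k.factorial : ℝ)⁻¹ with hc
        have hmem : p + c • w ∈ Q (AddSubgroup.closure (Set.range b)) n := by
          refine ih (by omega) _ (A_add hp (A_smul c hwA)) ?_ ?_
          · intro j hj x
            have hj' : j ≠ i ∧ j ∉ S := by simpa using hj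
            simp [hper j hj, hw, hl, hj'.1, hqper j hj'.2]
          · rw [fwdDiff_iter_add, fwdDiff_iter_const_smul, hwD, ← hq, smul_smul, hc]
            have : (k.factorial : ℝ) ≠ 0 := by positivity
            simp [this]
        have := Submodule.sub_mem _ hmem (Submodule.smul_mem _ c hwQ)
        simpa using this
    intro p hp hper
    refine key (n + 1) le_rfl p hp hper ?_
    have := A_iter hp (hbG i) (n + 1)
    rwa [Nat.sub_self] at this

lemma Q_form {n : ℕ} {p : (Fin r → ℝ) → ℝ} (hp : p ∈ Q G n) :
    ∃ f : (Fin r → Fin (n + 1)) → ((Fin r → ℝ) → ℝ),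
      (∀ j, Continuous (f j)) ∧ (∀ j, ∀ g ∈ G, ∀ x, f j (x + g) = f j x) ∧
      (∀ x, p x = ∑ j ∈ Finset.univ.filter
        (fun j : Fin r → Fin (n + 1) => (∑ k, (j k : ℕ)) ≤ n), f j x * ∏ k, x k ^ (j k : ℕ)) := by
  classical
  induction hp using Submodule.span_induction with
  | mem p h =>
    obtain ⟨f, j, hf, hper, hj, rfl⟩ := h
    have hlt : ∀ k, j k < n + 1 := fun k => Nat.lt_succ_of_le
      ((Finset.single_le_sum (f := j) (fun _ _ => Nat.zero_le _) (Finset.mem_univ k)).trans hj)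
    let J : Fin r → Fin (n + 1) := fun k => ⟨j k, hlt k⟩
    refine ⟨fun j' => if j' = J then f else 0, ?_, ?_, ?_⟩
    · intro j'
      dsimp only
      split_ifs
      · exact hf
      · exact continuous_zero
    · intro j' g hg x
      dsimp only
      split_ifs
      · exact hper g hg x
      · rfl
    · intro x
      rw [Finset.sum_eq_single J]
      · simp [J]
      · intro j' _ hne
        simp [hne]
      · intro h
        exact absurd (by simpa [J] using hj) h
  | zero => exact ⟨0, fun _ => continuous_zero, fun _ _ _ _ => rfl, fun x => by simp⟩
  | add p q _ _ hp hq =>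
    obtain ⟨f, h1, h2, h3⟩ := hp
    obtain ⟨f', h1', h2', h3'⟩ := hq
    refine ⟨f + f', fun j => (h1 j).add (h1' j), fun j g hg x => ?_, fun x => ?_⟩
    · simp [h2 j g hg, h2' j g hg]
    · simp only [Pi.add_apply, h3, h3', add_mul, Finset.sum_add_distrib]
  | smul c p _ hp =>
    obtain ⟨f, h1, h2, h3⟩ := hp
    refine ⟨c • f, fun j => (h1 j).const_smul c, fun j g hg x => ?_, fun x => ?_⟩
    · simp [h2 j g hg]
    · simp only [Pi.smul_apply, h3, smul_eq_mul, Finset.mul_sum, mul_assoc]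

lemma A_prod {f : (Fin r → ℝ) → ℝ} (hf : A G 1 f) (j : Fin r → ℕ) (s : Finset (Fin r)) :
    A G (1 + ∑ k ∈ s, j k) (fun x => f x * ∏ k ∈ s, x k ^ j k) := by
  classical
  induction s using Finset.induction_on with
  | empty => simpa using hf
  | insert i s hi ih =>
    convert A_lin_pow (LinearMap.proj i) (j i) ih using 1
    · rw [Finset.sum_insert hi]; ring
    · ext x
      rw [Finset.prod_insert hi]
      simp; ring

lemma A_sum {ι : Type*} {n : ℕ} (s : Finset ι) (F : ι → (Fin r → ℝ) → ℝ)
    (h : ∀ j ∈ s, A G n (F j)) : A G n (∑ j ∈ s, F j) :=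
  Finset.sum_induction F (A G n) (fun _ _ => A_add) (A_zero n) h

end PerPoly

/-- Let `G ⊂ ℝ^r` be a lattice of rank `r` (generated by `r`
linearly independent vectors `b₁,…,b_r`) acting on `C(ℝ^r)` by translations.
A continuous function `p` satisfies `D^{n+1} p = 0` (for all shifts from `G`)
if and only if `p` is a `G`-periodic polynomial of degree at most `n`, i.e.
`p(x) = Σ_{j₁+⋯+j_r ≤ n} f_{j₁,…,j_r}(x) x₁^{j₁}⋯x_r^{j_r}` with all
coefficients `f_{j₁,…,j_r}` continuous and `G`-periodic.  (Multi-indices with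
total degree at most `n` are encoded as functions `Fin r → Fin (n+1)` whose
values sum to at most `n`.) -/
theorem stmt_18 (r : ℕ) (b : Fin r → (Fin r → ℝ)) (hb : LinearIndependent ℝ b)
    (n : ℕ) (p : (Fin r → ℝ) → ℝ) (hp : Continuous p) :
    (∀ g : Fin (n + 1) → (Fin r → ℝ),
        (∀ i, g i ∈ AddSubgroup.closure (Set.range b)) →
        ∀ x, transD r (n + 1) p g x = 0)
      ↔ ∃ f : (Fin r → Fin (n + 1)) → ((Fin r → ℝ) → ℝ),
          (∀ j, Continuous (f j)) ∧
          (∀ j, ∀ g ∈ AddSubgroup.closure (Set.range b), ∀ x,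
            f j (x + g) = f j x) ∧
          (∀ x, p x =
            ∑ j ∈ Finset.univ.filter
                (fun j : Fin r → Fin (n + 1) => (∑ k, (j k : ℕ)) ≤ n),
              f j x * ∏ k, x k ^ (j k : ℕ)) := by
  rw [← PerPoly.A_iff (G := AddSubgroup.closure (Set.range b)) (n + 1) p hp]
  constructor
  · intro h
    exact PerPoly.Q_form (PerPoly.main b hb Finset.univ n p h (by simp))
  · rintro ⟨f, h1, h2, h3⟩
    have : p = ∑ j ∈ Finset.univ.filter
        (fun j : Fin r → Fin (n + 1) => (∑ k, (j k : ℕ)) ≤ n),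
          (fun x => f j x * ∏ k, x k ^ (j k : ℕ)) := by
      ext x
      rw [h3, Finset.sum_apply]
    rw [this]
    refine PerPoly.A_sum _ _ fun j hj => ?_
    have hj' := (Finset.mem_filter.1 hj).2
    refine PerPoly.A_mono (by omega) (PerPoly.A_prod (f := f j) ⟨h1 j, fun g hg => ?_⟩
      (fun k => (j k : ℕ)) Finset.univ)
    show _ = _
    ext x
    simp [h2 j g hg x]
end

section
/- Let G ⊂ R^r be a lattice of rank r acting on C(R^r) by translations, and let A be a G-invariant vector subspace of C(R^r). Set A^G = A ∩ C^G (the G-periodic functions in A) and, for n ≥ 0, let P_n^G(A) be the space of all G-periodic polynomials of degree at most n that belong to A. If dim A^G < ∞, then dim P_n^G(A) < ∞ for every n ≥ 0. -/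
/-- `p : ℝ^r → ℝ` is a `G`-periodic polynomial of degree at most `n`:
`p(x) = Σ_{j₁+⋯+j_r ≤ n} f_{j₁,…,j_r}(x) x₁^{j₁}⋯x_r^{j_r}` for some
continuous `G`-periodic coefficient functions `f_{j₁,…,j_r}`.  (Multi-indices
with total degree at most `n` are encoded as functions `Fin r → Fin (n+1)`
whose values sum to at most `n`.) -/
def IsPeriodicPoly (r : ℕ) (G : AddSubgroup (Fin r → ℝ)) (n : ℕ)
    (p : (Fin r → ℝ) → ℝ) : Prop :=
  ∃ f : (Fin r → Fin (n + 1)) → ((Fin r → ℝ) → ℝ),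
    (∀ j, Continuous (f j)) ∧
    (∀ j, ∀ g ∈ G, ∀ x, f j (x + g) = f j x) ∧
    (∀ x, p x =
      ∑ j ∈ Finset.univ.filter
          (fun j : Fin r → Fin (n + 1) => (∑ k, (j k : ℕ)) ≤ n),
        f j x * ∏ k, x k ^ (j k : ℕ))

namespace PeriodicAux

/-- Translation by `v` minus the identity. -/
def diffOp {r : ℕ} (v : Fin r → ℝ) : ((Fin r → ℝ) → ℝ) →ₗ[ℝ] ((Fin r → ℝ) → ℝ) where
  toFun p := fun x => p (x + v) - p x
  map_add' p q := by ext x; simp; ring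
  map_smul' c p := by ext x; simp; ring

/-- Functions killed by all `n`-fold differences along the `b i`. -/
def nilp {r : ℕ} (b : Fin r → (Fin r → ℝ)) : ℕ → Submodule ℝ ((Fin r → ℝ) → ℝ)
  | 0 => ⊥
  | n + 1 => ⨅ i, (nilp b n).comap (diffOp (b i))

lemma mem_succ {r : ℕ} (b : Fin r → (Fin r → ℝ)) (n : ℕ) (p : (Fin r → ℝ) → ℝ) :
    p ∈ nilp b (n + 1) ↔ ∀ i, diffOp (b i) p ∈ nilp b n := by
  simp [nilp, Submodule.mem_iInf]

lemma le_succ {r : ℕ} (b : Fin r → (Fin r → ℝ)) (n : ℕ) : nilp b n ≤ nilp b (n + 1) := by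
  induction n with
  | zero => exact bot_le
  | succ n ih =>
    intro p hp
    rw [mem_succ] at hp ⊢
    exact fun i => ih (hp i)

lemma nilp_mono {r : ℕ} (b : Fin r → (Fin r → ℝ)) : Monotone (nilp b) :=
  monotone_nat_of_le_succ (le_succ b)

lemma mul_coord {r : ℕ} (b : Fin r → (Fin r → ℝ)) (k : Fin r) (n : ℕ) :
    ∀ p ∈ nilp b n, (fun x => p x * x k) ∈ nilp b (n + 1) := by
  induction n with
  | zero =>
    intro p hp
    have : p = 0 := hp
    subst this
    have h : (fun x : Fin r → ℝ => (0 : (Fin r → ℝ) → ℝ) x * x k) = 0 := by ext x; simp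
    rw [h]; exact zero_mem _
  | succ n ih =>
    intro p hp
    rw [mem_succ]
    intro i
    have hd := (mem_succ b n p).1 hp i
    have h : diffOp (b i) (fun x => p x * x k) =
        (fun x => diffOp (b i) p x * x k) + b i k • (p + diffOp (b i) p) := by
      ext x; simp [diffOp]; ring
    rw [h]
    exact add_mem (ih _ hd) (Submodule.smul_mem _ _ (add_mem hp (le_succ b n hd)))

lemma mul_pow {r : ℕ} (b : Fin r → (Fin r → ℝ)) (k : Fin r) (n m : ℕ) :
    ∀ p ∈ nilp b n, (fun x => p x * x k ^ m) ∈ nilp b (n + m) := by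
  induction m with
  | zero => intro p hp; simpa using hp
  | succ m ih =>
    intro p hp
    have := mul_coord b k _ _ (ih p hp)
    simpa [pow_succ, mul_assoc, add_assoc] using this

lemma mul_prod {r : ℕ} (b : Fin r → (Fin r → ℝ)) (n : ℕ) (j : Fin r → ℕ)
    (p : (Fin r → ℝ) → ℝ) (hp : p ∈ nilp b n) (s : Finset (Fin r)) :
    (fun x => p x * ∏ k ∈ s, x k ^ j k) ∈ nilp b (n + ∑ k ∈ s, j k) := by
  classical
  induction s using Finset.induction_on with
  | empty => simpa using hp
  | insert a s ha ih =>
    have := mul_pow b a _ (j a) _ ih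
    simp only [Finset.prod_insert ha, Finset.sum_insert ha]
    convert this using 1
    · congr 1; ring
    · funext x; ring

lemma periodic_of_mem {r : ℕ} (b : Fin r → (Fin r → ℝ)) (p : (Fin r → ℝ) → ℝ)
    (hp : p ∈ nilp b 1) : ∀ g ∈ AddSubgroup.closure (Set.range b), ∀ x, p (x + g) = p x := by
  intro g hg
  induction hg using AddSubgroup.closure_induction with
  | mem g hg =>
    obtain ⟨i, rfl⟩ := hg
    intro x
    have h : diffOp (b i) p = 0 := (mem_succ b 0 p).1 hp i
    have := congrFun h x
    simp only [diffOp, LinearMap.coe_mk, AddHom.coe_mk, Pi.zero_apply] at this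
    linarith
  | zero => simp
  | add g h _ _ hg hh => intro x; rw [← add_assoc, hh, hg]
  | neg g _ hg => intro x; rw [← hg (x + -g)]; simp

lemma mem_of_periodic {r : ℕ} (b : Fin r → (Fin r → ℝ)) (p : (Fin r → ℝ) → ℝ)
    (hp : ∀ g ∈ AddSubgroup.closure (Set.range b), ∀ x, p (x + g) = p x) : p ∈ nilp b 1 := by
  rw [mem_succ]
  intro i
  have : diffOp (b i) p = 0 := by
    ext x
    simp [diffOp, hp (b i) (AddSubgroup.subset_closure ⟨i, rfl⟩) x]
  rw [this]; exact zero_mem _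

lemma fg_of_le' {V : Type*} [AddCommGroup V] [Module ℝ V] {S T : Submodule ℝ V}
    (h : S ≤ T) (hT : T.FG) : S.FG := by
  haveI : FiniteDimensional ℝ T := Module.Finite.iff_fg.2 hT
  exact Module.Finite.iff_fg.1 (Submodule.finiteDimensional_of_le h)

lemma fg_inf {r : ℕ} (b : Fin r → (Fin r → ℝ)) (A : Submodule ℝ ((Fin r → ℝ) → ℝ))
    (hinv : ∀ f ∈ A, ∀ i, diffOp (b i) f ∈ A) (h1 : (A ⊓ nilp b 1).FG) (n : ℕ) :
    (A ⊓ nilp b (n + 1)).FG := by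
  induction n with
  | zero => exact h1
  | succ n ih =>
    let D := LinearMap.pi (fun i => diffOp (b i))
    apply Submodule.fg_of_fg_map_of_fg_inf_ker D
    · refine fg_of_le' (T := Submodule.pi Set.univ (fun _ => A ⊓ nilp b (n + 1))) ?_ ?_
      · rintro _ ⟨p, ⟨hpA, hp⟩, rfl⟩ i -
        exact ⟨hinv p hpA i, (mem_succ b _ p).1 hp i⟩
      · exact Submodule.fg_pi (fun _ => ih)
    · refine fg_of_le' ?_ h1
      rintro p ⟨⟨hpA, -⟩, hk⟩
      refine ⟨hpA, (mem_succ b _ p).2 fun i => ?_⟩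
      have : diffOp (b i) p = 0 := congrFun (show D p = 0 from hk) i
      rw [this]; exact zero_mem _

end PeriodicAux

/-- Let `G ⊂ ℝ^r` be a lattice of rank `r` (generated by `r`
linearly independent vectors `b₁,…,b_r`) acting on `C(ℝ^r)` by translations,
and let `A` be a `G`-invariant subspace of `C(ℝ^r)` (a subspace of functions,
all continuous, stable under translation by elements of `G`).  If the space
`A^G` of `G`-periodic functions in `A` is finite dimensional (equivalently,
contained in the span of a finite set), then for every `n ≥ 0` the space
`P_n^G(A)` of `G`-periodic polynomials of degree at most `n` belonging to `A`
is finite dimensional (contained in the span of a finite set). -/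
theorem stmt_19 (r : ℕ) (b : Fin r → (Fin r → ℝ)) (hb : LinearIndependent ℝ b)
    (A : Submodule ℝ ((Fin r → ℝ) → ℝ))
    (hcont : ∀ f ∈ A, Continuous f)
    (hinv : ∀ f ∈ A, ∀ g ∈ AddSubgroup.closure (Set.range b),
      (fun x => f (x + g)) ∈ A)
    (hfin : ∃ s : Finset ((Fin r → ℝ) → ℝ),
      ∀ f ∈ A, (∀ g ∈ AddSubgroup.closure (Set.range b), ∀ x, f (x + g) = f x) →
        f ∈ Submodule.span ℝ (s : Set ((Fin r → ℝ) → ℝ)))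
    (n : ℕ) :
    ∃ t : Finset ((Fin r → ℝ) → ℝ),
      ∀ p ∈ A, IsPeriodicPoly r (AddSubgroup.closure (Set.range b)) n p →
        p ∈ Submodule.span ℝ (t : Set ((Fin r → ℝ) → ℝ)) := by
  obtain ⟨s, hs⟩ := hfin
  have h1 : (A ⊓ PeriodicAux.nilp b 1).FG := by
    refine PeriodicAux.fg_of_le' (T := Submodule.span ℝ (s : Set ((Fin r → ℝ) → ℝ))) ?_ ⟨s, rfl⟩
    rintro p ⟨hpA, hp⟩
    exact hs p hpA (PeriodicAux.periodic_of_mem b p hp)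
  have hd : ∀ f ∈ A, ∀ i, PeriodicAux.diffOp (b i) f ∈ A := fun f hf i =>
    sub_mem (hinv f hf (b i) (AddSubgroup.subset_closure ⟨i, rfl⟩)) hf
  obtain ⟨t, ht⟩ := PeriodicAux.fg_inf b A hd h1 n
  refine ⟨t, fun p hpA hp => ?_⟩
  rw [ht]
  refine ⟨hpA, ?_⟩
  obtain ⟨f, -, hper, hsum⟩ := hp
  have hpe : p = ∑ j ∈ Finset.univ.filter
      (fun j : Fin r → Fin (n + 1) => (∑ k, (j k : ℕ)) ≤ n),
        fun x => f j x * ∏ k, x k ^ (j k : ℕ) := by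
    ext x; rw [hsum x, Finset.sum_apply]
  rw [hpe]
  refine sum_mem fun j hj => ?_
  have hj' := (Finset.mem_filter.1 hj).2
  refine PeriodicAux.nilp_mono b (show 1 + ∑ k, (j k : ℕ) ≤ n + 1 by omega) ?_
  exact PeriodicAux.mul_prod b 1 (fun k => (j k : ℕ)) (f j)
    (PeriodicAux.mem_of_periodic b (f j) (hper j)) Finset.univ
end
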